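/- arXiv:1906.03062 — 2 statements merged into one kernel-verified Lean document; each statement's English description precedes it below -/
import Mathlib

section
/- Let n ≥ 2, k ≥ 2, N > 0, and let {(α_i,ρ_i)}_{i=1}^k be a 1/N-quadrature rule exact for the space 𝒫_{2k-1} of real polynomials of degree at most 2k-1; define the test functions Q_j = 1/N + ∑_{i=1}^k ρ_i P_j^{(n)}(α_i) for j ∈ ℕ. If Q_{2k+2} ≠ 0 or Q_{2k+3} ≠ 0, then every 1/N-quadrature rule exact for Λ_{n,k} has at least k+1 (distinct) nodes. -/
open MeasureTheory Finset
open scoped Classical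

/-- The (unnormalized) Gegenbauer weight `(1 - t²)^((n-3)/2)`. -/
noncomputable def gegWeight (n : ℕ) (t : ℝ) : ℝ := (1 - t ^ 2) ^ (((n : ℝ) - 3) / 2)

/-- Integration against the probability measure `μ_n` on `[-1,1]` with density
proportional to `(1 - t²)^((n-3)/2)`. -/
noncomputable def gegInt (n : ℕ) (f : ℝ → ℝ) : ℝ :=
  (∫ t in Set.Icc (-1 : ℝ) 1, gegWeight n t)⁻¹ *
    ∫ t in Set.Icc (-1 : ℝ) 1, f t * gegWeight n t

/-- `P : ℕ → ℝ[X]` is the family of Gegenbauer polynomials for dimension `n`: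
`deg P_i = i`, `P_i(1) = 1`, pairwise orthogonal in `L²(μ_n)`. -/
def IsGegenbauer (n : ℕ) (P : ℕ → Polynomial ℝ) : Prop :=
  (∀ i, (P i).natDegree = i) ∧ (∀ i, (P i).eval 1 = 1) ∧
    ∀ i j, i ≠ j → gegInt n (fun t => (P i).eval t * (P j).eval t) = 0

/-- A `1/N`-quadrature rule with nodes `α` and weights `ρ`, exact for a set `Λ`
of functions on `[-1,1]`. -/
def IsQuadratureRule (n : ℕ) (N : ℝ) {k : ℕ} (α ρ : Fin k → ℝ)
    (Λ : Set (ℝ → ℝ)) : Prop :=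
  (∀ i, -1 ≤ α i) ∧ (∀ i, α i < 1) ∧ StrictMono α ∧ (∀ i, 0 < ρ i) ∧
    ∀ f ∈ Λ, gegInt n f = f 1 / N + ∑ i, ρ i * f (α i)

/-- The space `𝒫_m` of real polynomials of degree at most `m`, as functions on `ℝ`. -/
def polySpace (m : ℕ) : Set (ℝ → ℝ) :=
  {f | ∃ p : Polynomial ℝ, p.natDegree ≤ m ∧ f = fun t => p.eval t}

/-- Membership of a polynomial in `Λ_{n,k} = 𝒫_{2k-1} ⊕ span{P_{2k+2}, P_{2k+3}}`:
degree at most `2k+3` and orthogonality to `P_{2k}` and `P_{2k+1}` in `L²(μ_n)`. -/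
def InLambda (n k : ℕ) (P : ℕ → Polynomial ℝ) (p : Polynomial ℝ) : Prop :=
  p.natDegree ≤ 2 * k + 3 ∧
    gegInt n (fun t => p.eval t * (P (2 * k)).eval t) = 0 ∧
    gegInt n (fun t => p.eval t * (P (2 * k + 1)).eval t) = 0

/-- The space `Λ_{n,k}`, as a set of functions on `ℝ`. -/
def LambdaSpace (n k : ℕ) (P : ℕ → Polynomial ℝ) : Set (ℝ → ℝ) :=
  {f | ∃ p : Polynomial ℝ, InLambda n k P p ∧ f = fun t => p.eval t}

/-!
Two rules whose node sums agree on all polynomials of degree `< d`, and which have at most `d` nodes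
in total, agree on every polynomial: reduce modulo the product of all the `X - x`, `x` a node, a
monic polynomial of degree at most `d` which both node sums ignore. Orthogonality puts every
polynomial of degree `< 2k` into `Λ_{n,k}`, so both rules are exact there. If the second one had at
most `k` nodes, the two rules would agree on `P_j` for `j = 2k+2, 2k+3`, where the first gives `Q_j`
and the second gives `∫ P_j dμ_n = 0`.
-/

open Polynomial in
lemma natDegree_le_sub_one_of_mem_degreeLT {R : Type*} [Semiring R] {d : ℕ} {p : R[X]}
    (hp : p ∈ degreeLT R d) : p.natDegree ≤ d - 1 :=
  natDegree_le_iff_coeff_eq_zero.2 fun i hi ↦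
    (degree_lt_iff_coeff_zero _ _).1 (mem_degreeLT.1 hp) i (by omega)

section NodeSum

open Polynomial

variable {R ι κ : Type*} [CommRing R] [Fintype ι] [Fintype κ]
  {α ρ : ι → R} {β θ : κ → R} {d : ℕ} {p q : R[X]}

/-- The weighted sum `∑ ρ i * p(α i)` of values of `p`: the contribution of the free nodes to a
quadrature rule. The nodes `α` need not be distinct. -/
def nodeSum (α ρ : ι → R) (p : R[X]) : R := ∑ i, ρ i * p.eval (α i)

lemma nodeSum_modByMonic (hq : ∀ i, q.IsRoot (α i)) :
    nodeSum α ρ (p %ₘ q) = nodeSum α ρ p := by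
  simp only [nodeSum, modByMonic_eq_sub_mul_div, eval_sub, eval_mul, (hq _).eq_zero, zero_mul,
    sub_zero]

theorem lt_card_add_card_of_nodeSum_ne
    (h : ∀ p ∈ degreeLT R d, nodeSum α ρ p = nodeSum β θ p)
    (hp : nodeSum α ρ p ≠ nodeSum β θ p) : d < Fintype.card ι + Fintype.card κ := by
  by_contra! hd
  have : Nontrivial R := nontrivial_of_ne _ _ hp
  let q := Lagrange.nodal univ α * Lagrange.nodal univ β
  have hmonic : q.Monic := Lagrange.nodal_monic.mul Lagrange.nodal_monic
  have hα (i : ι) : q.IsRoot (α i) :=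
    root_mul_right_of_isRoot _ (Lagrange.eval_nodal_at_node (mem_univ i))
  have hβ (j : κ) : q.IsRoot (β j) :=
    root_mul_left_of_isRoot _ (Lagrange.eval_nodal_at_node (mem_univ j))
  have hdegree : q.degree ≤ d := by
    rw [Lagrange.nodal_monic.degree_mul, Lagrange.degree_nodal, Lagrange.degree_nodal]
    exact_mod_cast hd
  apply hp
  rw [← nodeSum_modByMonic hα, ← nodeSum_modByMonic hβ]
  exact h _ (mem_degreeLT.2 ((degree_modByMonic_lt p hmonic).trans_le hdegree))

end NodeSum

section OrthogonalSequence

open Polynomial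

variable {R : Type*} [CommRing R] {L : R[X] →ₗ[R] R} {S : Sequence R} {d e j : ℕ} {G : Set ℕ}

lemma apply_mul_eq_zero_of_mem_degreeLT (hS : ∀ i < d, IsUnit (S i).leadingCoeff)
    (horth : ∀ i < d, L (S i * S j) = 0) {p : R[X]} (hp : p ∈ degreeLT R d) :
    L (p * S j) = 0 := by
  rw [← S.span_degreeLT hS] at hp
  suffices Submodule.span R (S '' Set.Iio d) ≤ LinearMap.ker (L ∘ₗ LinearMap.mulRight R (S j)) from
    this hp
  rw [Submodule.span_le]
  rintro _ ⟨i, hi, rfl⟩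
  exact horth i hi

/-- The polynomials of degree at most `e` whose components along `S i` vanish for `i` in the set `G`
of skipped degrees, where `S` is orthogonal for `L`. The space `Λ_{n,k}` is the case `e = 2k+3`,
`G = {2k, 2k+1}`. -/
def gapSpace (L : R[X] →ₗ[R] R) (S : ℕ → R[X]) (e : ℕ) (G : Set ℕ) : Set R[X] :=
  {p | p.natDegree ≤ e ∧ ∀ i ∈ G, L (p * S i) = 0}

lemma degreeLT_subset_gapSpace (hS : ∀ i < d, IsUnit (S i).leadingCoeff)
    (horth : Pairwise fun i j ↦ L (S i * S j) = 0) (hde : d ≤ e) (hG : ∀ i ∈ G, d ≤ i) :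
    (degreeLT R d : Set R[X]) ⊆ gapSpace L S e G := fun _ hp ↦
  ⟨natDegree_le_of_degree_le ((mem_degreeLT.1 hp).le.trans (by exact_mod_cast hde)), fun i hi ↦
    apply_mul_eq_zero_of_mem_degreeLT hS (fun _ h ↦ horth (h.trans_le (hG i hi)).ne) hp⟩

lemma mem_gapSpace (horth : Pairwise fun i j ↦ L (S i * S j) = 0) (hje : j ≤ e) (hjG : j ∉ G) :
    S j ∈ gapSpace L S e G :=
  ⟨(S.natDegree_eq j).trans_le hje, fun _ hi ↦ horth (ne_of_mem_of_not_mem hi hjG).symm⟩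

lemma apply_sequence_eq_zero (hS : IsUnit (S 0).leadingCoeff)
    (horth : Pairwise fun i j ↦ L (S i * S j) = 0) (hj : j ≠ 0) : L (S j) = 0 := by
  have : Nontrivial R := nontrivial_iff.1 (nontrivial_of_ne _ _ (S.ne_zero 0))
  have hone : (1 : R[X]) ∈ degreeLT R 1 := mem_degreeLT.2 (by simp)
  simpa only [one_mul] using apply_mul_eq_zero_of_mem_degreeLT (L := L) (j := j)
    (by simpa using hS) (fun i hi ↦ horth (by omega)) hone

/-- `B` is the part common to both rules, such as a prescribed node with its weight. -/
theorem stmt_7_general {ι κ : Type*} [Fintype ι] [Fintype κ] {α ρ : ι → R} {β θ : κ → R}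
    (hS : ∀ i, IsUnit (S i).leadingCoeff) (horth : Pairwise fun i j ↦ L (S i * S j) = 0)
    (B : R[X] → R) (hG : ∀ i ∈ G, d ≤ i) (hj : j ≠ 0) (hdj : d ≤ j) (hje : j ≤ e) (hjG : j ∉ G)
    (hα : ∀ p ∈ degreeLT R d, L p = B p + nodeSum α ρ p)
    (hβ : ∀ p ∈ gapSpace L S e G, L p = B p + nodeSum β θ p)
    (hQ : B (S j) + nodeSum α ρ (S j) ≠ 0) :
    d < Fintype.card ι + Fintype.card κ := by
  have hlow := degreeLT_subset_gapSpace (fun i _ ↦ hS i) horth (hdj.trans hje) hG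
  have hagree (p : R[X]) (hp : p ∈ degreeLT R d) : nodeSum α ρ p = nodeSum β θ p :=
    add_left_cancel ((hα p hp).symm.trans (hβ p (hlow hp)))
  refine lt_card_add_card_of_nodeSum_ne hagree (p := S j) fun heq ↦ hQ ?_
  rw [heq, ← hβ _ (mem_gapSpace horth hje hjG), apply_sequence_eq_zero (hS 0) horth hj]

end OrthogonalSequence

section Gegenbauer

open Polynomial

variable {n k : ℕ} {P : ℕ → ℝ[X]}

/-- Integration of polynomials against `μ_n`, as a linear functional. -/
noncomputable def gegFunctional (n : ℕ) : ℝ[X] →ₗ[ℝ] ℝ where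
  toFun p := gegInt n fun t ↦ p.eval t
  map_add' p q := by
    by_cases h : IntegrableOn (gegWeight n) (Set.Icc (-1) 1)
    · have hint (r : ℝ[X]) : IntegrableOn (fun t ↦ r.eval t * gegWeight n t) (Set.Icc (-1) 1) :=
        h.continuousOn_mul r.continuousOn isCompact_Icc
      simp only [gegInt, eval_add, add_mul, integral_add (hint p) (hint q), mul_add]
    · -- Here the normalizing integral is `0` by convention, and so is `gegInt n`.
      simp only [gegInt, integral_undef h, inv_zero, zero_mul, add_zero]
  map_smul' c p := by
    simp only [gegInt, eval_smul, smul_eq_mul, mul_assoc, integral_const_mul, mul_left_comm _ c,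
      RingHom.id_apply]

lemma gegFunctional_mul (p q : ℝ[X]) :
    gegFunctional n (p * q) = gegInt n fun t ↦ p.eval t * q.eval t := by
  simp only [← eval_mul]
  rfl

lemma mem_gapSpace_gegFunctional_iff {p : ℝ[X]} :
    p ∈ gapSpace (gegFunctional n) P (2 * k + 3) {2 * k, 2 * k + 1} ↔ InLambda n k P p := by
  simp only [gapSpace, InLambda, Set.mem_ofPred_eq, Set.mem_insert_iff, Set.mem_singleton_iff,
    forall_eq_or_imp, forall_eq, gegFunctional_mul]

namespace IsGegenbauer

/-- The Gegenbauer polynomials as a sequence of polynomials indexed by their degrees. -/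
def sequence (hP : IsGegenbauer n P) : Sequence ℝ where
  elems' := P
  degree_eq' i := by
    have hne : P i ≠ 0 := fun h ↦ by simpa [h] using hP.2.1 i
    rw [degree_eq_natDegree hne, hP.1 i]

lemma pairwise_gegFunctional_eq_zero (hP : IsGegenbauer n P) :
    Pairwise fun i j ↦ gegFunctional n (hP.sequence i * hP.sequence j) = 0 := fun i j hij ↦
  (gegFunctional_mul _ _).trans (hP.2.2 i j hij)

lemma two_mul_lt_add_of_testFunction_ne_zero (hP : IsGegenbauer n P) {N : ℝ} {l m j : ℕ}
    {α ρ : Fin l → ℝ} {β θ : Fin m → ℝ} (hα : IsQuadratureRule n N α ρ (polySpace (2 * k - 1)))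
    (hβ : IsQuadratureRule n N β θ (LambdaSpace n k P)) (hj : j ∈ Icc (2 * k + 2) (2 * k + 3))
    (hQ : 1 / N + ∑ i, ρ i * (P j).eval (α i) ≠ 0) : 2 * k < l + m := by
  rw [mem_Icc] at hj
  have hα' (p : ℝ[X]) (hp : p ∈ degreeLT ℝ (2 * k)) :
      gegFunctional n p = p.eval 1 / N + nodeSum α ρ p :=
    hα.2.2.2.2 _ ⟨p, natDegree_le_sub_one_of_mem_degreeLT hp, rfl⟩
  have hβ' (p : ℝ[X])
      (hp : p ∈ gapSpace (gegFunctional n) P (2 * k + 3) {2 * k, 2 * k + 1}) :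
      gegFunctional n p = p.eval 1 / N + nodeSum β θ p :=
    hβ.2.2.2.2 _ ⟨p, mem_gapSpace_gegFunctional_iff.1 hp, rfl⟩
  have hQ' : (P j).eval 1 / N + nodeSum α ρ (P j) ≠ 0 := by rwa [hP.2.1 j]
  simpa only [Fintype.card_fin] using stmt_7_general (S := hP.sequence) (fun i ↦ by simp)
    hP.pairwise_gegFunctional_eq_zero (fun p ↦ p.eval 1 / N) (by simp) (by omega) (by omega)
    hj.2 (by rintro (rfl | rfl) <;> omega) hα' hβ' hQ'

end IsGegenbauer

end Gegenbauer

/-- if a test function `Q_{2k+2}` or `Q_{2k+3}` is nonzero, every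
`1/N`-quadrature rule exact for `Λ_{n,k}` has at least `k+1` nodes. -/
theorem stmt_7 (n : ℕ) (hn : 2 ≤ n) (k : ℕ) (hk : 2 ≤ k) (N : ℝ) (hN : 0 < N)
    (P : ℕ → Polynomial ℝ) (hP : IsGegenbauer n P)
    (α ρ : Fin k → ℝ)
    (hquad : IsQuadratureRule n N α ρ (polySpace (2 * k - 1)))
    (hQ : (1 / N + ∑ i, ρ i * (P (2 * k + 2)).eval (α i)) ≠ 0 ∨
          (1 / N + ∑ i, ρ i * (P (2 * k + 3)).eval (α i)) ≠ 0) :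
    ∀ (m : ℕ) (β θ : Fin m → ℝ),
      IsQuadratureRule n N β θ (LambdaSpace n k P) → k + 1 ≤ m := by
  intro m β θ hβ
  have : 2 * k < k + m := by
    rcases hQ with hQ | hQ <;>
      exact hP.two_mul_lt_add_of_testFunction_ne_zero hquad hβ (by simp) hQ
  omega
end

section
/- Let n ≥ 2, k ≥ 2, N > 0, and let c_1, c_2, c_3 ∈ ℝ; set r(t) = P_{k+1}^{1,0}(t) + c_1 P_k^{1,0}(t) + c_2 P_{k-1}^{1,0}(t) + c_3 P_{k-2}^{1,0}(t). Then: (a) r has at least k-1 distinct real roots, of which at least k-2 lie in [-1,1) (in particular, r has at most one pair of non-real conjugate roots). (b) Suppose moreover that r has k+1 distinct real roots -1 ≤ β_1 < ⋯ < β_{k+1} < 1; that ∫ r dμ_n = r(1)/N; that ∫ (1-t)·r(t)·u(t) dμ_n = 0 for every real polynomial u of degree at most k+1 such that ∫ (1-t)·r(t)·u(t)·P_{2k}^{(n)}(t) dμ_n = ∫ (1-t)·r(t)·u(t)·P_{2k+1}^{(n)}(t) dμ_n = 0; and that the weights θ_i := (∫ ℓ_i dμ_n)/ℓ_i(β_i),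 where ℓ_i(t) = (t-1)·∏_{j≠i}(t-β_j), are all positive. Then {(β_i,θ_i)}_{i=1}^{k+1} is a 1/N-quadrature rule exact for Λ_{n,k}. -/
open MeasureTheory Finset
open scoped Classical

/-- Integration against the probability measure `ν_n` on `[-1,1]` with density
proportional to `(1-t)(1 - t²)^((n-3)/2)`. -/
noncomputable def adjInt (n : ℕ) (f : ℝ → ℝ) : ℝ :=
  (∫ t in Set.Icc (-1 : ℝ) 1, (1 - t) * gegWeight n t)⁻¹ *
    ∫ t in Set.Icc (-1 : ℝ) 1, f t * ((1 - t) * gegWeight n t)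

/-- `Q : ℕ → ℝ[X]` is the family of adjacent polynomials `P_i^{1,0}` for dimension `n`:
`deg Q_i = i`, `Q_i(1) = 1`, pairwise orthogonal in `L²(ν_n)`. -/
def IsAdjacent (n : ℕ) (Q : ℕ → Polynomial ℝ) : Prop :=
  (∀ i, (Q i).natDegree = i) ∧ (∀ i, (Q i).eval 1 = 1) ∧
    ∀ i j, i ≠ j → adjInt n (fun t => (Q i).eval t * (Q j).eval t) = 0

/-! For the roots, integration against `ν_n` matters only as a positive linear functional `L`.
Multiplying `r` by the linear factors at its sign changes in `(-1, 1)` gives a polynomial of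
constant sign, on which `L` does not vanish; since `L (r * q) = 0` whenever `deg q < k - 2`, there
are at least `k - 2` sign changes. If there are exactly `k - 2` of them, that product has odd degree
`2k - 1`, which forces a further root outside the interval.

For the quadrature rule, divide `p ∈ Λ_{n,k}` by `w = (1 - t) r`. Lagrange interpolation at `1` and
the roots of `r` evaluates the remainder exactly. The remainder has degree at most
`k + 1 < 2k`, hence is orthogonal to `P_{2k}` and `P_{2k+1}` just as `p` is, so the hypothesis on
`r` applies to the quotient and the term `w * (p / w)` integrates to zero. -/

section

open Polynomial

section RealRoots

theorem exists_eval_neg_of_odd_natDegree {p : ℝ[X]} (hodd : Odd p.natDegree) :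
    ∃ x, p.eval x < 0 := by
  have of_leadingCoeff_nonpos {q : ℝ[X]} (hq : Odd q.natDegree) (hlc : q.leadingCoeff ≤ 0) :
      ∃ x, q.eval x < 0 :=
    ((q.tendsto_atBot_of_leadingCoeff_nonpos (natDegree_pos_iff_degree_pos.1 hq.pos)
      hlc).eventually_lt_atBot 0).exists
  rcases le_total p.leadingCoeff 0 with hlc | hlc
  · exact of_leadingCoeff_nonpos hodd hlc
  · obtain ⟨x, hx⟩ := of_leadingCoeff_nonpos (q := p.comp (-X)) (by simpa [natDegree_comp])
      (by simpa [leadingCoeff_comp, hodd.neg_one_pow])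
    exact ⟨-x, by simpa using hx⟩

theorem exists_root_notMem_Ioo_of_odd_natDegree {p : ℝ[X]} {a b : ℝ} (hab : a < b)
    (hodd : Odd p.natDegree) (hp : ∀ t ∈ Set.Ioo a b, 0 ≤ p.eval t) :
    ∃ x ∉ Set.Ioo a b, p.eval x = 0 := by
  have hIcc : Set.Icc a b ⊆ {t | 0 ≤ p.eval t} := by
    rw [← closure_Ioo hab.ne]
    exact closure_minimal hp (isClosed_le continuous_const p.continuous)
  obtain ⟨y, hy⟩ := exists_eval_neg_of_odd_natDegree hodd
  have hy_notMem : y ∉ Set.Icc a b := fun h => (hIcc h).not_gt hy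
  rcases lt_or_ge y a with hya | hay
  · obtain ⟨x, hx, hx0⟩ := intermediate_value_Icc hya.le p.continuousOn
      ⟨hy.le, hIcc (Set.left_mem_Icc.2 hab.le)⟩
    exact ⟨x, fun h => h.1.not_ge hx.2, hx0⟩
  · have hby : b < y := lt_of_not_ge fun h => hy_notMem ⟨hay, h⟩
    obtain ⟨x, hx, hx0⟩ := intermediate_value_Icc' hby.le p.continuousOn
      ⟨hy.le, hIcc (Set.right_mem_Icc.2 hab.le)⟩
    exact ⟨x, fun h => h.2.not_ge hx.1, hx0⟩

theorem exists_ne_zero_forall_nonneg_mul_eval {s : Set ℝ} (hs : IsPreconnected s) {p : ℝ[X]}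
    (hp : ∀ t ∈ s, p.eval t ≠ 0) : ∃ c : ℝ, c ≠ 0 ∧ ∀ t ∈ s, 0 ≤ c * p.eval t := by
  by_cases hnonneg : ∀ t ∈ s, 0 ≤ p.eval t
  · exact ⟨1, one_ne_zero, by simpa using hnonneg⟩
  push Not at hnonneg
  obtain ⟨x, hx, hpx⟩ := hnonneg
  refine ⟨-1, by simp, fun y hy => ?_⟩
  by_contra! hpy
  obtain ⟨z, hz, hz0⟩ := hs.intermediate_value hx hy p.continuousOn ⟨hpx.le, by linarith⟩
  exact hp z hz hz0

/-- `S` consists of the roots of odd multiplicity in `s`. -/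
theorem exists_roots_forall_nonneg_mul_nodal {s : Set ℝ} (hs : IsPreconnected s) (p : ℝ[X]) :
    ∃ (S : Finset ℝ) (c : ℝ), c ≠ 0 ∧ (∀ x ∈ S, x ∈ s ∧ p.eval x = 0) ∧
      ∀ t ∈ s, 0 ≤ (p * (C c * Lagrange.nodal S id)).eval t := by
  induction hd : p.natDegree using Nat.strong_induction_on generalizing p with
  | _ d ih =>
  rcases eq_or_ne p 0 with rfl | hp
  · exact ⟨∅, 1, by simp⟩
  by_cases hroot : ∃ a ∈ s, p.eval a = 0
  · obtain ⟨a, ha, hpa⟩ := hroot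
    obtain ⟨q, rfl⟩ := dvd_iff_isRoot.2 hpa
    have hq : q.natDegree < d := by
      rw [← hd, natDegree_mul (X_sub_C_ne_zero a) (right_ne_zero_of_mul hp), natDegree_X_sub_C]
      omega
    obtain ⟨S, c, hc, hS, hnonneg⟩ := ih _ hq q rfl
    have hS' (x) (hx : x ∈ S) : x ∈ s ∧ ((X - C a) * q).eval x = 0 := by simp [hS x hx]
    by_cases haS : a ∈ S
    · refine ⟨S.erase a, c, hc, fun x hx => hS' x (mem_of_mem_erase hx), fun t ht => ?_⟩
      have hfactor : (X - C a) * q * (C c * Lagrange.nodal (S.erase a) id) =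
          q * (C c * Lagrange.nodal S id) := by
        rw [Lagrange.nodal_eq_mul_nodal_erase haS, id]
        ring
      exact hfactor ▸ hnonneg t ht
    · refine ⟨insert a S, c, hc, forall_mem_insert _ _ _ |>.2 ⟨⟨ha, hpa⟩, hS'⟩, fun t ht => ?_⟩
      have hfactor : (X - C a) * q * (C c * Lagrange.nodal (insert a S) id) =
          (X - C a) ^ 2 * (q * (C c * Lagrange.nodal S id)) := by
        rw [Lagrange.nodal_insert_eq_nodal haS, id]
        ring
      rw [hfactor, eval_mul, eval_pow]
      exact mul_nonneg (sq_nonneg _) (hnonneg t ht)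
  · push Not at hroot
    obtain ⟨c, hc, hnonneg⟩ := exists_ne_zero_forall_nonneg_mul_eval hs hroot
    exact ⟨∅, c, hc, by simp, fun t ht => by simpa [mul_comm] using hnonneg t ht⟩

end RealRoots

section PositiveFunctional

/-- A linear functional on real polynomials is positive on `s` if it is strictly positive on every
nonzero polynomial that is nonnegative on `s`. -/
def IsPositiveOn (L : ℝ[X] →ₗ[ℝ] ℝ) (s : Set ℝ) : Prop :=
  ∀ p : ℝ[X], p ≠ 0 → (∀ t ∈ s, 0 ≤ p.eval t) → 0 < L p

variable {L : ℝ[X] →ₗ[ℝ] ℝ}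

theorem IsPositiveOn.le_natDegree_of_forall_nonneg_mul {s : Set ℝ} (hL : IsPositiveOn L s)
    {p q : ℝ[X]} (hp : p ≠ 0) (hq : q ≠ 0) (hnonneg : ∀ t ∈ s, 0 ≤ (p * q).eval t) {m : ℕ}
    (horth : ∀ f : ℝ[X], f.degree < m → L (p * f) = 0) : m ≤ q.natDegree := by
  by_contra! hlt
  exact (hL _ (mul_ne_zero hp hq) hnonneg).ne' (horth q ((natDegree_lt_iff_degree_lt hq).1 hlt))

theorem IsPositiveOn.exists_roots_of_orthogonal {a b : ℝ} (hab : a < b)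
    (hL : IsPositiveOn L (Set.Ioo a b)) {p : ℝ[X]} (hp : p ≠ 0) {m : ℕ}
    (hodd : Odd (p.natDegree + m)) (horth : ∀ f : ℝ[X], f.degree < m → L (p * f) = 0) :
    ∃ S : Finset ℝ, (∀ x ∈ S, p.eval x = 0) ∧ m + 1 ≤ #S ∧
      m ≤ #(S.filter (· ∈ Set.Ioo a b)) := by
  obtain ⟨S, c, hc, hS, hnonneg⟩ :=
    exists_roots_forall_nonneg_mul_nodal isPreconnected_Ioo p
  have hS_filter : S.filter (· ∈ Set.Ioo a b) = S := filter_true_of_mem fun x hx => (hS x hx).1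
  have hq0 : C c * Lagrange.nodal S id ≠ 0 := mul_ne_zero (C_ne_zero.2 hc) Lagrange.nodal_ne_zero
  have hqdeg : (C c * Lagrange.nodal S id).natDegree = #S := by
    rw [natDegree_C_mul hc, Lagrange.natDegree_nodal]
  have hm : m ≤ #S := hqdeg ▸ hL.le_natDegree_of_forall_nonneg_mul hp hq0 hnonneg horth
  rcases hm.lt_or_eq with hlt | rfl
  · exact ⟨S, fun x hx => (hS x hx).2, hlt, hS_filter.symm ▸ hm⟩
  obtain ⟨y, hy, hy0⟩ := exists_root_notMem_Ioo_of_odd_natDegree hab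
    (by rwa [natDegree_mul hp hq0, hqdeg]) hnonneg
  have hyS : y ∉ S := fun h => hy (hS y h).1
  have hpy : p.eval y = 0 := by
    rw [eval_mul, eval_C_mul] at hy0
    exact (mul_eq_zero.1 hy0).resolve_right <| mul_ne_zero hc <|
      Lagrange.eval_nodal_not_at_node fun x hx => ne_of_mem_of_not_mem hx hyS |>.symm
  refine ⟨insert y S, forall_mem_insert _ _ _ |>.2 ⟨hpy, fun x hx => (hS x hx).2⟩,
    (card_insert_of_notMem hyS).ge, ?_⟩
  rw [filter_insert, if_neg hy, hS_filter]

end PositiveFunctional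

section OrthogonalSequence

variable {K : Type*} [Field K] {L : K[X] →ₗ[K] K} {S : Polynomial.Sequence K}

theorem span_image_Iio_eq_degreeLT (S : Polynomial.Sequence K) (m : ℕ) :
    Submodule.span K (S '' Set.Iio m) = degreeLT K m :=
  S.span_degreeLT fun i _ => (leadingCoeff_ne_zero.2 (S.ne_zero i)).isUnit

theorem map_mul_eq_zero_of_degree_lt (hS : Pairwise fun i j => L (S i * S j) = 0) {i : ℕ}
    {q : K[X]} (hq : q.degree < i) : L (S i * q) = 0 := by
  rw [← mem_degreeLT, ← span_image_Iio_eq_degreeLT S] at hq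
  have hle : Submodule.span K (S '' Set.Iio i) ≤ (L ∘ₗ LinearMap.mulLeft K (S i)).ker :=
    Submodule.span_le.2 (Set.forall_mem_image.2 fun _ hj => hS (ne_of_gt hj))
  exact hle hq

theorem map_mul_eq_zero_of_mem_span_Ici (hS : Pairwise fun i j => L (S i * S j) = 0) {m : ℕ}
    {f q : K[X]} (hf : f ∈ Submodule.span K (S '' Set.Ici m)) (hq : q.degree < m) :
    L (f * q) = 0 := by
  have hle : Submodule.span K (S '' Set.Ici m) ≤ (L ∘ₗ LinearMap.mulRight K q).ker :=
    Submodule.span_le.2 <| Set.forall_mem_image.2 fun _ hi =>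
      map_mul_eq_zero_of_degree_lt hS (hq.trans_le (Nat.cast_le.2 hi))
  exact hle hf

theorem map_add_mul_eq_zero_of_mem_span_Ico (hS : Pairwise fun i j => L (S i * S j) = 0) {m d : ℕ}
    (hmd : m ≤ d) {f q : K[X]} (hf : f ∈ Submodule.span K (S '' Set.Ico m d))
    (hq : q.degree < m) : L ((S d + f) * q) = 0 := by
  refine map_mul_eq_zero_of_mem_span_Ici hS (Submodule.add_mem _ ?_ ?_) hq
  · exact Submodule.subset_span (Set.mem_image_of_mem S hmd)
  · exact Submodule.span_mono (Set.image_mono Set.Ico_subset_Ici_self) hf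

theorem degree_add_of_mem_span_Ico {m d : ℕ} {f : K[X]}
    (hf : f ∈ Submodule.span K (S '' Set.Ico m d)) : (S d + f).degree = d := by
  have hfd : f.degree < d := by
    rw [← mem_degreeLT, ← span_image_Iio_eq_degreeLT S]
    exact Submodule.span_mono (Set.image_mono fun _ hi => hi.2) hf
  rw [degree_add_eq_left_of_degree_lt (by rwa [S.degree_eq]), S.degree_eq]

theorem IsPositiveOn.exists_roots_of_mem_span_Ico {L : ℝ[X] →ₗ[ℝ] ℝ}
    {S : Polynomial.Sequence ℝ} {a b : ℝ} (hab : a < b) (hL : IsPositiveOn L (Set.Ioo a b))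
    (hS : Pairwise fun i j => L (S i * S j) = 0) {m d : ℕ} (hmd : m ≤ d) (hodd : Odd (d + m))
    {f : ℝ[X]} (hf : f ∈ Submodule.span ℝ (S '' Set.Ico m d)) :
    ∃ T : Finset ℝ, (∀ x ∈ T, (S d + f).eval x = 0) ∧ m + 1 ≤ #T ∧
      m ≤ #(T.filter (· ∈ Set.Ioo a b)) := by
  have hdeg := degree_add_of_mem_span_Ico hf
  refine hL.exists_roots_of_orthogonal hab (degree_ne_bot.1 (by simp [hdeg])) ?_
    fun q hq => map_add_mul_eq_zero_of_mem_span_Ico hS hmd hf hq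
  rwa [natDegree_eq_of_degree_eq_some hdeg]

theorem three_terms_mem_span_Ico (S : ℕ → K[X]) (k : ℕ) (c₁ c₂ c₃ : K) :
    C c₁ * S k + C c₂ * S (k - 1) + C c₃ * S (k - 2) ∈
      Submodule.span K (S '' Set.Ico (k - 2) (k + 1)) := by
  have hmem (c : K) {i : ℕ} (hi : i ∈ Set.Ico (k - 2) (k + 1)) :
      C c * S i ∈ Submodule.span K (S '' Set.Ico (k - 2) (k + 1)) := by
    rw [← smul_eq_C_mul]
    exact Submodule.smul_mem _ c (Submodule.subset_span (Set.mem_image_of_mem S hi))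
  exact add_mem (add_mem (hmem c₁ ⟨by omega, by omega⟩) (hmem c₂ ⟨by omega, by omega⟩))
    (hmem c₃ ⟨by omega, by omega⟩)

theorem exists_sequence_coe_eq {R : Type*} [Semiring R] {P : ℕ → R[X]}
    (hdeg : ∀ i, (P i).natDegree = i) (hne : ∀ i, P i ≠ 0) :
    ∃ S : Polynomial.Sequence R, ⇑S = P :=
  ⟨⟨P, fun i => by rw [degree_eq_natDegree (hne i), hdeg]⟩, rfl⟩

end OrthogonalSequence

section Division

variable {K : Type*} [Field K]

theorem map_mul_div_mul_eq_zero (L : K[X] →ₗ[K] K) {w q : K[X]} (hw : w ≠ 0)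
    (hq : ∀ v : K[X], v.degree < w.degree → L (v * q) = 0) {p : K[X]} (hp : L (p * q) = 0) :
    L (w * (p / w) * q) = 0 := by
  have hsub : w * (p / w) * q = p * q - p % w * q := by
    linear_combination q * EuclideanDomain.mod_add_div p w
  rw [hsub, map_sub, hp, hq _ (degree_mod_lt p hw), sub_zero]

theorem natDegree_div (p : K[X]) {q : K[X]} (hq : q ≠ 0) :
    (p / q).natDegree = p.natDegree - q.natDegree := by
  have hlc : q.leadingCoeff⁻¹ ≠ 0 := inv_ne_zero (leadingCoeff_ne_zero.2 hq)
  rw [Polynomial.div_def, natDegree_C_mul hlc,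
    natDegree_divByMonic _ (monic_mul_leadingCoeff_inv hq), natDegree_mul_C hlc]

end Division

section InterpolatoryQuadrature

theorem degree_C_sub_X_mul {R : Type*} [CommRing R] [IsDomain R] (c : R) (r : R[X]) :
    ((C c - X) * r).degree = r.degree + 1 := by
  rw [degree_mul, ← degree_neg (C c - X), neg_sub, degree_X_sub_C, add_comm]

theorem injective_optionElim {ι α : Type*} {β : ι → α} {c : α} (hβ : Function.Injective β)
    (hc : ∀ i, β i ≠ c) : Function.Injective fun o : Option ι => o.elim c β :=
  Option.injective_iff.2 ⟨hβ, by rintro ⟨i, hi⟩; exact hc i hi⟩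

variable {K ι : Type*} [Field K] [Fintype ι]

theorem eval_node_ne_zero {v : ι → K} (hv : Function.Injective v) {f : K[X]} (hf : f ≠ 0)
    (hdeg : f.degree < Fintype.card ι) {i : ι} (hzero : ∀ j, i ≠ j → f.eval (v j) = 0) :
    f.eval (v i) ≠ 0 := fun hi =>
  hf <| eq_zero_of_degree_lt_of_eval_index_eq_zero (s := univ) hv.injOn hdeg fun j _ =>
    (eq_or_ne i j).elim (fun hij => hij ▸ hi) (hzero j)

theorem eq_sum_smul_of_degree_lt_card {v : ι → K} (hv : Function.Injective v) {ℓ : ι → K[X]}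
    (hℓ : ∀ i, ℓ i ≠ 0) (hdeg : ∀ i, (ℓ i).degree < Fintype.card ι)
    (hzero : ∀ i j, i ≠ j → (ℓ i).eval (v j) = 0) {p : K[X]} (hp : p.degree < Fintype.card ι) :
    p = ∑ i, (p.eval (v i) / (ℓ i).eval (v i)) • ℓ i := by
  refine eq_of_degrees_lt_of_eval_index_eq univ hv.injOn hp ?_ fun j _ => ?_
  · exact mem_degreeLT.1 <| Submodule.sum_mem _ fun i _ =>
      Submodule.smul_mem _ _ (mem_degreeLT.2 (hdeg i))
  · rw [eval_finsetSum, sum_eq_single j (fun i _ hij => by simp [hzero i j hij]) (by simp)]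
    simp [eval_node_ne_zero hv (hℓ j) (hdeg j) (hzero j)]

theorem map_eq_sum_add_map_mul_div (L : K[X] →ₗ[K] K) {v : ι → K} (hv : Function.Injective v)
    {ℓ : ι → K[X]} (hℓ : ∀ i, ℓ i ≠ 0) (hdeg : ∀ i, (ℓ i).degree < Fintype.card ι)
    (hzero : ∀ i j, i ≠ j → (ℓ i).eval (v j) = 0) {w : K[X]}
    (hw : w.degree = Fintype.card ι) (hroot : ∀ i, w.eval (v i) = 0) (p : K[X]) :
    L p = ∑ i, L (ℓ i) / (ℓ i).eval (v i) * p.eval (v i) + L (w * (p / w)) := by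
  have hw0 : w ≠ 0 := degree_ne_bot.1 (by simp [hw])
  have hmod (i) : (p % w).eval (v i) = p.eval (v i) := by
    conv_rhs => rw [← EuclideanDomain.mod_add_div p w]
    simp [hroot i]
  have hinterp : L (p % w) = ∑ i, L (ℓ i) / (ℓ i).eval (v i) * p.eval (v i) := by
    rw [eq_sum_smul_of_degree_lt_card hv hℓ hdeg hzero ((degree_mod_lt p hw0).trans_eq hw)]
    simp only [map_sum, map_smul, smul_eq_mul, hmod]
    exact sum_congr rfl fun i _ => by ring
  rw [← hinterp, ← map_add, EuclideanDomain.mod_add_div]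

variable {β : ι → K} {c : K}

theorem eval_ne_zero_of_degree_eq_card (hβ : Function.Injective β) (hc : ∀ i, β i ≠ c)
    {r : K[X]} (hr : r.degree = Fintype.card ι) (hroot : ∀ i, r.eval (β i) = 0) :
    r.eval c ≠ 0 := by
  refine eval_node_ne_zero (i := none) (injective_optionElim hβ hc)
    (degree_ne_bot.1 (by simp [hr])) ?_ ?_
  · rw [hr, Fintype.card_option]
    exact_mod_cast Nat.lt_succ_self _
  · rintro (_ | j) h
    exacts [absurd rfl h, hroot j]

variable [DecidableEq ι]

/-- The monic polynomial with roots `c` and all the nodes `β j` except `β i`; up to scaling, it is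
the Lagrange basis polynomial of `β i` for the nodes `c` and `β`. -/
noncomputable def puncturedNodal (c : K) (β : ι → K) (i : ι) : K[X] :=
  (X - C c) * Lagrange.nodal (univ.erase i) β

theorem eval_puncturedNodal (c : K) (β : ι → K) (i : ι) (t : K) :
    (puncturedNodal c β i).eval t = (t - c) * ∏ j ∈ univ.erase i, (t - β j) := by
  simp [puncturedNodal, Lagrange.eval_nodal]

theorem eval_puncturedNodal_of_ne (c : K) (β : ι → K) {i j : ι} (hij : i ≠ j) :
    (puncturedNodal c β i).eval (β j) = 0 := by
  rw [puncturedNodal, eval_mul, Lagrange.eval_nodal_at_node (by simp [hij.symm]), mul_zero]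

theorem degree_puncturedNodal (c : K) (β : ι → K) (i : ι) :
    (puncturedNodal c β i).degree = Fintype.card ι := by
  rw [puncturedNodal, degree_mul, degree_X_sub_C, Lagrange.degree_nodal, add_comm]
  exact_mod_cast card_erase_add_one (mem_univ i)

theorem map_eq_add_sum_add_map_mul_div (L : K[X] →ₗ[K] K) (hβ : Function.Injective β)
    (hc : ∀ i, β i ≠ c) {r : K[X]} (hr : r.degree = Fintype.card ι)
    (hroot : ∀ i, r.eval (β i) = 0) (p : K[X]) :
    L p = L r / r.eval c * p.eval c +
      ∑ i, L (puncturedNodal c β i) / (puncturedNodal c β i).eval (β i) * p.eval (β i) +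
      L ((C c - X) * r * (p / ((C c - X) * r))) := by
  let ℓ : Option ι → K[X] := fun o => o.elim r (puncturedNodal c β)
  have hℓ : ∀ o, (ℓ o).degree = ((Fintype.card ι : ℕ) : WithBot ℕ)
    | none => hr
    | some i => degree_puncturedNodal c β i
  have hzero : ∀ o o', o ≠ o' → (ℓ o).eval (o'.elim c β) = 0
    | none, none, h => absurd rfl h
    | none, some j, _ => hroot j
    | some i, none, _ => by simp [ℓ, eval_puncturedNodal]
    | some i, some j, h => eval_puncturedNodal_of_ne c β (by simpa using h)
  have hw : ((C c - X) * r).degree = ((Fintype.card (Option ι) : ℕ) : WithBot ℕ) := by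
    rw [degree_C_sub_X_mul, hr, Fintype.card_option, Nat.cast_succ]
  have hwroot : ∀ o : Option ι, ((C c - X) * r).eval (o.elim c β) = 0
    | none => by simp
    | some i => by simp [hroot]
  rw [map_eq_sum_add_map_mul_div L (injective_optionElim hβ hc)
    (fun o => degree_ne_bot.1 (by simp [hℓ]))
    (fun o => by rw [hℓ, Fintype.card_option]; exact_mod_cast Nat.lt_succ_self _)
    hzero hw hwroot p, Fintype.sum_option]
  rfl

end InterpolatoryQuadrature

section WeightedMean

variable {w : ℝ → ℝ} {a b : ℝ}

theorem integrableOn_eval_mul (hw : IntegrableOn w (Set.Icc a b)) (p : ℝ[X]) :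
    IntegrableOn (fun t => p.eval t * w t) (Set.Icc a b) :=
  hw.continuousOn_mul p.continuousOn isCompact_Icc

/-- The mean of a polynomial over `[a, b]` with respect to the integrable weight `w`, normalised by
the total weight, as a linear functional. -/
noncomputable def weightedMean (hw : IntegrableOn w (Set.Icc a b)) : ℝ[X] →ₗ[ℝ] ℝ where
  toFun p := (∫ t in Set.Icc a b, w t)⁻¹ * ∫ t in Set.Icc a b, p.eval t * w t
  map_add' p q := by
    simp only [eval_add, add_mul]
    rw [integral_add (integrableOn_eval_mul hw p) (integrableOn_eval_mul hw q), mul_add]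
  map_smul' c p := by
    simp only [eval_smul, smul_eq_mul, mul_assoc, RingHom.id_apply]
    rw [integral_const_mul, mul_left_comm]

theorem setIntegral_eval_mul_pos (hw : IntegrableOn w (Set.Icc a b)) (hab : a < b)
    (hpos : ∀ t ∈ Set.Ioo a b, 0 < w t) {p : ℝ[X]} (hp : p ≠ 0)
    (hnonneg : ∀ t ∈ Set.Ioo a b, 0 ≤ p.eval t) :
    0 < ∫ t in Set.Icc a b, p.eval t * w t := by
  rw [integral_Icc_eq_integral_Ioo,
    setIntegral_pos_iff_support_of_nonneg_ae
      (ae_restrict_of_forall_mem measurableSet_Ioo fun t ht =>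
        mul_nonneg (hnonneg t ht) (hpos t ht).le)
      ((integrableOn_eval_mul hw p).mono_set Set.Ioo_subset_Icc_self)]
  have hsupport : Set.Ioo a b \ p.roots.toFinset ⊆
      Function.support (fun t => p.eval t * w t) ∩ Set.Ioo a b := fun t ht =>
    ⟨mul_ne_zero (fun h => ht.2 (by simp [hp, h])) (hpos t ht.1).ne', ht.1⟩
  calc 0 < volume (Set.Ioo a b) := by simpa using hab
    _ = volume (Set.Ioo a b \ p.roots.toFinset) :=
      (measure_sdiff_null (Finset.measure_zero _ _)).symm
    _ ≤ _ := measure_mono hsupport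

theorem isPositiveOn_weightedMean (hw : IntegrableOn w (Set.Icc a b)) (hab : a < b)
    (hpos : ∀ t ∈ Set.Ioo a b, 0 < w t) : IsPositiveOn (weightedMean hw) (Set.Ioo a b) := by
  intro p hp hnonneg
  have htotal : 0 < ∫ t in Set.Icc a b, w t := by
    simpa using setIntegral_eval_mul_pos hw hab hpos one_ne_zero (by simp)
  exact mul_pos (inv_pos.2 htotal) (setIntegral_eval_mul_pos hw hab hpos hp hnonneg)

end WeightedMean

section Gegenbauer

variable {n : ℕ}

theorem gegWeight_pos {t : ℝ} (ht : t ∈ Set.Ioo (-1 : ℝ) 1) : 0 < gegWeight n t :=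
  Real.rpow_pos_of_pos (by nlinarith [ht.1, ht.2]) _

/-- The exponent is smallest for `n = 2`, the Chebyshev weight. -/
theorem integrableOn_gegWeight (hn : 2 ≤ n) : IntegrableOn (gegWeight n) (Set.Icc (-1) 1) := by
  have hcheb : IntegrableOn (fun t : ℝ => √(1 - t ^ 2)⁻¹) (Set.Ioo (-1) 1) :=
    (intervalIntegrable_iff_integrableOn_Ioo_of_le (by norm_num)).1
      Polynomial.Chebyshev.intervalIntegrable_sqrt_one_sub_sq_inv
  rw [integrableOn_Icc_iff_integrableOn_Ioo]
  refine hcheb.mono' (Measurable.aestronglyMeasurable (by unfold gegWeight; fun_prop)) <|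
    ae_restrict_of_forall_mem measurableSet_Ioo fun t ht => ?_
  have hpos : 0 < 1 - t ^ 2 := by nlinarith [ht.1, ht.2]
  have hn' : (2 : ℝ) ≤ n := by exact_mod_cast hn
  rw [Real.norm_of_nonneg (gegWeight_pos ht).le, Real.sqrt_eq_rpow, Real.inv_rpow hpos.le,
    ← Real.rpow_neg hpos.le]
  exact Real.rpow_le_rpow_of_exponent_ge hpos (by nlinarith [sq_nonneg t]) (by linarith)

theorem integrableOn_one_sub_mul_gegWeight (hn : 2 ≤ n) :
    IntegrableOn (fun t => (1 - t) * gegWeight n t) (Set.Icc (-1) 1) :=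
  (integrableOn_gegWeight hn).continuousOn_mul (by fun_prop) isCompact_Icc

/-- Integration of polynomials against `μ_n`, as a linear functional. -/
noncomputable def gegMean (hn : 2 ≤ n) : ℝ[X] →ₗ[ℝ] ℝ :=
  weightedMean (integrableOn_gegWeight hn)

/-- Integration of polynomials against `ν_n`, as a linear functional. -/
noncomputable def adjMean (hn : 2 ≤ n) : ℝ[X] →ₗ[ℝ] ℝ :=
  weightedMean (integrableOn_one_sub_mul_gegWeight hn)

theorem gegMean_apply (hn : 2 ≤ n) (p : ℝ[X]) : gegMean hn p = gegInt n fun t => p.eval t :=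
  rfl

theorem adjMean_apply (hn : 2 ≤ n) (p : ℝ[X]) : adjMean hn p = adjInt n fun t => p.eval t :=
  rfl

theorem isPositiveOn_adjMean (hn : 2 ≤ n) : IsPositiveOn (adjMean hn) (Set.Ioo (-1) 1) :=
  isPositiveOn_weightedMean _ (by norm_num) fun _ ht =>
    mul_pos (sub_pos.2 ht.2) (gegWeight_pos ht)

theorem ne_zero_of_eval_one_eq_one {p : ℝ[X]} (hp : p.eval 1 = 1) : p ≠ 0 := by
  rintro rfl
  simp at hp

theorem IsGegenbauer.exists_sequence (hn : 2 ≤ n) {P : ℕ → ℝ[X]} (hP : IsGegenbauer n P) :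
    ∃ S : Polynomial.Sequence ℝ, ⇑S = P ∧ Pairwise fun i j => gegMean hn (S i * S j) = 0 := by
  obtain ⟨hdeg, hone, horth⟩ := hP
  obtain ⟨S, rfl⟩ := exists_sequence_coe_eq hdeg fun i => ne_zero_of_eval_one_eq_one (hone i)
  exact ⟨S, rfl, fun i j hij => by simpa only [gegMean_apply, eval_mul] using horth i j hij⟩

theorem IsAdjacent.exists_sequence (hn : 2 ≤ n) {Q : ℕ → ℝ[X]} (hQ : IsAdjacent n Q) :
    ∃ S : Polynomial.Sequence ℝ, ⇑S = Q ∧ Pairwise fun i j => adjMean hn (S i * S j) = 0 := by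
  obtain ⟨hdeg, hone, horth⟩ := hQ
  obtain ⟨S, rfl⟩ := exists_sequence_coe_eq hdeg fun i => ne_zero_of_eval_one_eq_one (hone i)
  exact ⟨S, rfl, fun i j hij => by simpa only [adjMean_apply, eval_mul] using horth i j hij⟩

theorem IsAdjacent.exists_roots (hn : 2 ≤ n) {k : ℕ} (hk : 2 ≤ k) {Q : ℕ → ℝ[X]}
    (hQ : IsAdjacent n Q) (c₁ c₂ c₃ : ℝ) {r : ℝ[X]}
    (hr : r = Q (k + 1) + C c₁ * Q k + C c₂ * Q (k - 1) + C c₃ * Q (k - 2)) :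
    ∃ S : Finset ℝ, (∀ x ∈ S, r.eval x = 0) ∧ k - 1 ≤ #S ∧
      k - 2 ≤ #(S.filter fun x => -1 ≤ x ∧ x < 1) := by
  obtain ⟨S, rfl, hS⟩ := hQ.exists_sequence hn
  obtain ⟨T, hT, hcard, hcard_Ioo⟩ :=
    (isPositiveOn_adjMean hn).exists_roots_of_mem_span_Ico (by norm_num) hS (by omega)
      ⟨k - 1, by omega⟩ (three_terms_mem_span_Ico S k c₁ c₂ c₃)
  refine ⟨T, by simpa only [hr, add_assoc] using hT, by omega, hcard_Ioo.trans ?_⟩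
  exact card_le_card (monotone_filter_right _ fun x _ hx => ⟨hx.1.le, hx.2⟩)

theorem IsAdjacent.degree_eq (hn : 2 ≤ n) {k : ℕ} {Q : ℕ → ℝ[X]}
    (hQ : IsAdjacent n Q) (c₁ c₂ c₃ : ℝ) :
    (Q (k + 1) + C c₁ * Q k + C c₂ * Q (k - 1) + C c₃ * Q (k - 2)).degree = (k + 1 : ℕ) := by
  obtain ⟨S, rfl, -⟩ := hQ.exists_sequence hn
  simpa only [add_assoc] using degree_add_of_mem_span_Ico (three_terms_mem_span_Ico S k c₁ c₂ c₃)

theorem InLambda.gegMean_mul_div_eq_zero (hn : 2 ≤ n) {k : ℕ} (hk : 2 ≤ k) {P : ℕ → ℝ[X]}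
    (hP : IsGegenbauer n P) {w : ℝ[X]} (hw : w.degree = (k + 2 : ℕ))
    (hw_orth : ∀ u : ℝ[X], u.natDegree ≤ k + 1 → gegMean hn (w * u * P (2 * k)) = 0 →
      gegMean hn (w * u * P (2 * k + 1)) = 0 → gegMean hn (w * u) = 0)
    {p : ℝ[X]} (hp : InLambda n k P p) : gegMean hn (w * (p / w)) = 0 := by
  obtain ⟨S, rfl, hS⟩ := hP.exists_sequence hn
  obtain ⟨hdeg, horth₀, horth₁⟩ := hp
  have hw0 : w ≠ 0 := degree_ne_bot.1 (by simp [hw])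
  have htransfer {m : ℕ} (hm : k + 2 ≤ m) (hpm : gegInt n (fun t => p.eval t * (S m).eval t) = 0) :
      gegMean hn (w * (p / w) * S m) = 0 := by
    refine map_mul_div_mul_eq_zero _ hw0 (fun v hv => ?_)
      (by simpa only [gegMean_apply, eval_mul] using hpm)
    rw [mul_comm]
    exact map_mul_eq_zero_of_degree_lt hS (hv.trans_le (hw ▸ Nat.cast_le.2 hm))
  refine hw_orth _ ?_ (htransfer (by omega) horth₀) (htransfer (by omega) horth₁)
  rw [natDegree_div p hw0, natDegree_eq_of_degree_eq_some hw]
  omega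

theorem InLambda.gegInt_eq (hn : 2 ≤ n) {k : ℕ} (hk : 2 ≤ k) {N : ℝ} {P : ℕ → ℝ[X]}
    (hP : IsGegenbauer n P) {r : ℝ[X]} (hr : r.degree = (k + 1 : ℕ)) {β θ : Fin (k + 1) → ℝ}
    (hβ : Function.Injective β) (hβ_ne : ∀ i, β i ≠ 1) (hroot : ∀ i, r.eval (β i) = 0)
    (hmean : gegInt n (fun t => r.eval t) = r.eval 1 / N)
    (horth : ∀ u : ℝ[X], u.natDegree ≤ k + 1 →
      gegInt n (fun t => (1 - t) * r.eval t * u.eval t * (P (2 * k)).eval t) = 0 →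
      gegInt n (fun t => (1 - t) * r.eval t * u.eval t * (P (2 * k + 1)).eval t) = 0 →
      gegInt n (fun t => (1 - t) * r.eval t * u.eval t) = 0)
    (hθ : ∀ i, θ i = gegInt n (fun t => (t - 1) * ∏ j ∈ univ.erase i, (t - β j)) /
      ((β i - 1) * ∏ j ∈ univ.erase i, (β i - β j)))
    {p : ℝ[X]} (hp : InLambda n k P p) :
    gegInt n (fun t => p.eval t) = p.eval 1 / N + ∑ i, θ i * p.eval (β i) := by
  have hr_card : r.degree = Fintype.card (Fin (k + 1)) := by rw [hr, Fintype.card_fin]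
  have hr_one : r.eval 1 ≠ 0 := eval_ne_zero_of_degree_eq_card hβ hβ_ne hr_card hroot
  have hw : ((C 1 - X) * r).degree = ((k + 2 : ℕ) : WithBot ℕ) := by
    rw [degree_C_sub_X_mul, hr]
    rfl
  have hremainder : gegMean hn ((C 1 - X) * r * (p / ((C 1 - X) * r))) = 0 :=
    hp.gegMean_mul_div_eq_zero hn hk hP hw fun u hu h₀ h₁ => by
      simpa [gegMean_apply] using horth u hu (by simpa [gegMean_apply] using h₀)
        (by simpa [gegMean_apply] using h₁)
  have hweight (i) : gegMean hn (puncturedNodal 1 β i) / (puncturedNodal 1 β i).eval (β i) =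
      θ i := by
    simp only [hθ, gegMean_apply, eval_puncturedNodal]
  have hquad := map_eq_add_sum_add_map_mul_div (gegMean hn) hβ hβ_ne hr_card hroot p
  simp only [hremainder, hweight, add_zero] at hquad
  rw [gegMean_apply, gegMean_apply, hmean, div_div_cancel_left' hr_one] at hquad
  rw [hquad, inv_mul_eq_div]

end Gegenbauer

end

/-- roots of `r = P_{k+1}^{1,0} + c₁P_k^{1,0} + c₂P_{k-1}^{1,0} + c₃P_{k-2}^{1,0}`,
and the resulting second-level `1/N`-quadrature rule for `Λ_{n,k}`. -/
theorem stmt_9 (n : ℕ) (hn : 2 ≤ n) (k : ℕ) (hk : 2 ≤ k) (N : ℝ) (hN : 0 < N)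
    (P : ℕ → Polynomial ℝ) (hP : IsGegenbauer n P)
    (Q : ℕ → Polynomial ℝ) (hQadj : IsAdjacent n Q)
    (c₁ c₂ c₃ : ℝ) (r : Polynomial ℝ)
    (hr : r = Q (k + 1) + Polynomial.C c₁ * Q k + Polynomial.C c₂ * Q (k - 1) +
        Polynomial.C c₃ * Q (k - 2)) :
    (∃ S : Finset ℝ, (∀ x ∈ S, r.eval x = 0) ∧ k - 1 ≤ S.card ∧
        k - 2 ≤ (S.filter (fun x => -1 ≤ x ∧ x < 1)).card) ∧
    ∀ β θ : Fin (k + 1) → ℝ, StrictMono β → -1 ≤ β 0 → β (Fin.last k) < 1 →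
      (∀ i, r.eval (β i) = 0) →
      gegInt n (fun t => r.eval t) = r.eval 1 / N →
      (∀ u : Polynomial ℝ, u.natDegree ≤ k + 1 →
        gegInt n (fun t => (1 - t) * r.eval t * u.eval t * (P (2 * k)).eval t) = 0 →
        gegInt n (fun t => (1 - t) * r.eval t * u.eval t * (P (2 * k + 1)).eval t) = 0 →
        gegInt n (fun t => (1 - t) * r.eval t * u.eval t) = 0) →
      (∀ i, θ i =
        gegInt n (fun t => (t - 1) * ∏ j ∈ Finset.univ.erase i, (t - β j)) /
          ((β i - 1) * ∏ j ∈ Finset.univ.erase i, (β i - β j))) →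
      (∀ i, 0 < θ i) →
      IsQuadratureRule n N β θ (LambdaSpace n k P) := by
  have hdeg : r.degree = (k + 1 : ℕ) := hr ▸ hQadj.degree_eq hn c₁ c₂ c₃
  refine ⟨hQadj.exists_roots hn hk c₁ c₂ c₃ hr,
    fun β θ hβ hβ_zero hβ_last hroot hmean horth hθ hθ_pos => ?_⟩
  have hβ_lt (i) : β i < 1 := (hβ.monotone (Fin.le_last i)).trans_lt hβ_last
  refine ⟨fun i => hβ_zero.trans (hβ.monotone (Fin.zero_le i)), hβ_lt, hβ, hθ_pos, ?_⟩
  rintro _ ⟨p, hp, rfl⟩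
  exact hp.gegInt_eq hn hk hP hdeg hβ.injective (fun i => (hβ_lt i).ne) hroot hmean horth hθ
end
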